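/- Let C ∈ RH∞^{n×n} be real-rational. Then [P,C] is stable for every strictly negative imaginary (SNI) P ∈ RH∞^{n×n} satisfying P(∞) ≥ 0 if and only if C is negative imaginary (NI) and C(0) ≤ 0 (negative semidefinite). -/

import Mathlib

open Matrix Polynomial Filter Topology
open scoped ComplexOrder

noncomputable section

namespace NIControl

/-- Evaluate a real-rational function at a complex point (junk value at poles). -/
def evalC (f : RatFunc ℝ) (s : ℂ) : ℂ :=
  f.eval (algebraMap ℝ ℂ) s

/-- `s` is a pole of the real-rational function `f`
(the reduced denominator vanishes at `s`). -/
def IsPoleAt (f : RatFunc ℝ) (s : ℂ) : Prop :=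
  f.denom.eval₂ (algebraMap ℝ ℂ) s = 0

variable {n : ℕ}

/-- Pointwise evaluation of a real-rational transfer matrix at a complex point. -/
def evalM (G : Matrix (Fin n) (Fin n) (RatFunc ℝ)) (s : ℂ) : Matrix (Fin n) (Fin n) ℂ :=
  Matrix.of fun i j => evalC (G i j) s

/-- Pointwise evaluation of a real-rational transfer matrix at a real point. -/
def evalR (G : Matrix (Fin n) (Fin n) (RatFunc ℝ)) (x : ℝ) : Matrix (Fin n) (Fin n) ℝ :=
  Matrix.of fun i j => (G i j).eval (RingHom.id ℝ) x

/-- Value at `s = ∞` of a proper real-rational function. -/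
def atInfinity (f : RatFunc ℝ) : ℝ :=
  if f.num.degree = f.denom.degree then f.num.leadingCoeff / f.denom.leadingCoeff else 0

/-- The instantaneous gain `G(∞)` of a proper real-rational transfer matrix. -/
def evalInf (G : Matrix (Fin n) (Fin n) (RatFunc ℝ)) : Matrix (Fin n) (Fin n) ℝ :=
  Matrix.of fun i j => atInfinity (G i j)

/-- The matrix `G` has a pole at `s`. -/
def HasPole (G : Matrix (Fin n) (Fin n) (RatFunc ℝ)) (s : ℂ) : Prop :=
  ∃ i j, IsPoleAt (G i j) s

/-- All entries of `G` are proper rational functions. -/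
def Proper (G : Matrix (Fin n) (Fin n) (RatFunc ℝ)) : Prop :=
  ∀ i j, (G i j).num.degree ≤ (G i j).denom.degree

/-- All entries of `G` are strictly proper rational functions. -/
def StrictlyProper (G : Matrix (Fin n) (Fin n) (RatFunc ℝ)) : Prop :=
  ∀ i j, (G i j).num.degree < (G i j).denom.degree

/-- The pole of `G` at the origin (if any) is at most simple. -/
def NoDoubleOriginPole (G : Matrix (Fin n) (Fin n) (RatFunc ℝ)) : Prop :=
  ∀ i j, (G i j).denom.rootMultiplicity 0 ≤ 1

/-- Membership in `RH∞`: proper and no poles in the closed right-half complex plane. -/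
def MemRHinf {m : Type*} [Fintype m] (G : Matrix m m (RatFunc ℝ)) : Prop :=
  (∀ i j, (G i j).num.degree ≤ (G i j).denom.degree) ∧
  ∀ s : ℂ, 0 ≤ s.re → ∀ i j, ¬ IsPoleAt (G i j) s

/-- The point `jω` on the imaginary axis. -/
def jw (ω : ℝ) : ℂ := Complex.I * (ω : ℂ)

/-- The negative-imaginary frequency kernel `j (M − M*)`. -/
def niKer (M : Matrix (Fin n) (Fin n) ℂ) : Matrix (Fin n) (Fin n) ℂ :=
  Complex.I • (M - Mᴴ)

/-- Negative imaginary (NI) real-rational transfer matrix. -/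
def IsNI (G : Matrix (Fin n) (Fin n) (RatFunc ℝ)) : Prop :=
  Proper G ∧
  (∀ s : ℂ, 0 < s.re → ¬ HasPole G s) ∧
  (∀ ω : ℝ, 0 < ω → ¬ HasPole G (jw ω) → (niKer (evalM G (jw ω))).PosSemidef) ∧
  (∀ ω : ℝ, 0 < ω → HasPole G (jw ω) →
    ∃ R : Matrix (Fin n) (Fin n) ℂ, R.PosSemidef ∧
      Tendsto (fun s : ℂ => (s - jw ω) • Complex.I • evalM G s) (𝓝[≠] jw ω) (𝓝 R)) ∧
  (HasPole G 0 →
    (∀ k : ℕ, 3 ≤ k → Tendsto (fun s : ℂ => s ^ k • evalM G s) (𝓝[≠] 0) (𝓝 0)) ∧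
    ∃ R : Matrix (Fin n) (Fin n) ℂ, R.PosSemidef ∧
      Tendsto (fun s : ℂ => s ^ 2 • evalM G s) (𝓝[≠] 0) (𝓝 R))

/-- Strictly negative imaginary (SNI) real-rational transfer matrix. -/
def IsSNI (G : Matrix (Fin n) (Fin n) (RatFunc ℝ)) : Prop :=
  MemRHinf G ∧ ∀ ω : ℝ, 0 < ω → (niKer (evalM G (jw ω))).PosDef

/-- Positive real (passive) real-rational transfer matrix. -/
def IsPositiveReal (G : Matrix (Fin n) (Fin n) (RatFunc ℝ)) : Prop :=
  MemRHinf G ∧ ∀ ω : ℝ, 0 ≤ ω → (evalM G (jw ω) + (evalM G (jw ω))ᴴ).PosSemidef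

/-- Output strictly passive real-rational transfer matrix. -/
def IsOSP (G : Matrix (Fin n) (Fin n) (RatFunc ℝ)) : Prop :=
  MemRHinf G ∧ ∃ ε : ℝ, 0 < ε ∧ ∀ ω : ℝ, 0 ≤ ω →
    (evalM G (jw ω) + (evalM G (jw ω))ᴴ -
      (ε : ℂ) • ((evalM G (jw ω))ᴴ * evalM G (jw ω))).PosSemidef

/-- Stability of the positive feedback interconnection `[P, C]`:
`[I; C] (I − P C)⁻¹ [I, P] ∈ RH∞`. -/
def FeedbackStable (P C : Matrix (Fin n) (Fin n) (RatFunc ℝ)) : Prop :=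
  ((1 : Matrix (Fin n) (Fin n) (RatFunc ℝ)) - P * C).det ≠ 0 ∧
  MemRHinf (Matrix.fromBlocks
    (1 - P * C)⁻¹ ((1 - P * C)⁻¹ * P)
    (C * (1 - P * C)⁻¹) (C * (1 - P * C)⁻¹ * P))

/-- All eigenvalues of the complex matrix `M` are real and less than `c`. -/
def eigsRealAndLT (M : Matrix (Fin n) (Fin n) ℂ) (c : ℝ) : Prop :=
  ∀ μ ∈ spectrum ℂ M, μ.im = 0 ∧ μ.re < c

/-- The (real) eigenvalues of the real matrix `M` are all real and its largest
eigenvalue is less than `c`. -/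
def maxEigLT (M : Matrix (Fin n) (Fin n) ℝ) (c : ℝ) : Prop :=
  eigsRealAndLT (M.map (Complex.ofReal)) c

/-- Loewner order `A ≤ B` on real matrices. -/
def LoewnerLE (A B : Matrix (Fin n) (Fin n) ℝ) : Prop := (B - A).PosSemidef

/-- Strict Loewner order `A < B` on real matrices. -/
def LoewnerLT (A B : Matrix (Fin n) (Fin n) ℝ) : Prop := (B - A).PosDef

/-! Sufficiency. For a vector `x`, the form of `(C(0) - C(s)) / s` and, for `x ≠ 0`, that of
`s (P(s) - P(∞))` are bounded analytic functions with real part `≥ 0`, respectively `> 0`, on the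
punctured imaginary axis. By Phragmén–Lindelöf and the maximum principle these signs extend to the
right half-plane, so that `Re (s̄ x* C(s) x) ≤ 0` and `Re (s y* P(s) y) > 0` for `s ≠ 0`. If
`P(s) C(s) x = x` with `x ≠ 0`, then `y = C(s) x` makes the two real parts equal, a contradiction;
hence `I - P C` is invertible over the ring of stable proper functions.

Necessity. A vector with `Im (x* C(jω) x) > 0` is destabilizing: a lightly damped rank-one mode
plus a small diagonal lag is SNI and can be tuned to satisfy `P(jω) y = x` for any `x, y` with
`Im (x* y) > 0`, in particular for `y = C(jω) x`. The same construction at `ω = 0` handles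
`C(0)`. -/

/-! ### Sesquilinear forms of matrices -/

section QuadForm

variable {ι : Type*} [Fintype ι]

/-- The form `x* M x` of a matrix `M`; over the reals it is the quadratic form `xᵀ M x`. -/
def quadForm {R : Type*} [NonUnitalNonAssocSemiring R] [Star R] (M : Matrix ι ι R)
    (x : ι → R) : R :=
  star x ⬝ᵥ M *ᵥ x

lemma quadForm_eq_sum {R : Type*} [NonUnitalSemiring R] [Star R] (M : Matrix ι ι R) (x : ι → R) :
    quadForm M x = ∑ i, ∑ j, star (x i) * (M i j * x j) := by
  simp [quadForm, dotProduct, mulVec, Finset.mul_sum]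

lemma quadForm_neg {R : Type*} [NonUnitalNonAssocRing R] [Star R] (M : Matrix ι ι R)
    (x : ι → R) : quadForm (-M) x = -quadForm M x := by
  simp only [quadForm, neg_mulVec, dotProduct_neg]

lemma quadForm_sub {R : Type*} [NonUnitalNonAssocRing R] [Star R] (M N : Matrix ι ι R)
    (x : ι → R) : quadForm (M - N) x = quadForm M x - quadForm N x := by
  simp only [quadForm, sub_mulVec, dotProduct_sub]

lemma quadForm_smul {R : Type*} [CommSemiring R] [Star R] (c : R) (M : Matrix ι ι R)
    (x : ι → R) : quadForm (c • M) x = c * quadForm M x := by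
  simp only [quadForm, smul_mulVec, dotProduct_smul, smul_eq_mul]

lemma quadForm_conjTranspose {R : Type*} [CommSemiring R] [StarRing R] (M : Matrix ι ι R)
    (x : ι → R) : quadForm Mᴴ x = star (quadForm M x) := by
  rw [quadForm, quadForm, star_dotProduct, star_mulVec, conjTranspose_conjTranspose,
    ← dotProduct_mulVec]

lemma quadForm_map_ofReal (A : Matrix ι ι ℝ) (x : ι → ℝ) :
    quadForm (A.map Complex.ofReal) (Complex.ofReal ∘ x) = ((quadForm A x : ℝ) : ℂ) := by
  simp [quadForm_eq_sum]

lemma quadForm_mulVec_of_fixed {R : Type*} [CommSemiring R] [StarRing R] {A B : Matrix ι ι R}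
    {x : ι → R} (hx : A *ᵥ (B *ᵥ x) = x) : quadForm A (B *ᵥ x) = star (quadForm B x) := by
  rw [quadForm, hx, quadForm, star_dotProduct, dotProduct_comm]

lemma det_one_sub_mul_eq_zero_iff [DecidableEq ι] {𝕜 : Type*} [Field 𝕜] {A B : Matrix ι ι 𝕜} :
    (1 - A * B).det = 0 ↔ ∃ x ≠ 0, A *ᵥ (B *ᵥ x) = x := by
  rw [← exists_mulVec_eq_zero_iff]
  refine exists_congr fun x => and_congr_right fun _ => ?_
  rw [sub_mulVec, one_mulVec, ← mulVec_mulVec, sub_eq_zero, eq_comm]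

lemma det_one_sub_mul_ne_zero [DecidableEq ι] {A B : Matrix ι ι ℝ} (hA : A.PosSemidef)
    (hB : ∀ x, quadForm B x ≤ 0) : (1 - A * B).det ≠ 0 := by
  intro hdet
  obtain ⟨x, hx0, hx⟩ := det_one_sub_mul_eq_zero_iff.mp hdet
  have hzero : quadForm A (B *ᵥ x) = 0 :=
    le_antisymm ((quadForm_mulVec_of_fixed hx).trans_le (hB x))
      (hA.dotProduct_mulVec_nonneg _)
  exact hx0 (hx ▸ (hA.dotProduct_mulVec_zero_iff _).mp hzero)

lemma posSemidef_smul_one_sub_smul_vecMulVec [DecidableEq ι] {k δ : ℝ} {b : ι → ℝ}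
    (hk : 0 ≤ k) (hb : k * ∑ i, b i ^ 2 ≤ δ) :
    (δ • (1 : Matrix ι ι ℝ) - k • vecMulVec b b).PosSemidef := by
  refine PosSemidef.of_dotProduct_mulVec_nonneg ?_ fun x => ?_
  · exact (isHermitian_one.smul (.all δ)).sub
      ((posSemidef_vecMulVec_self_star b).isHermitian.smul (.all k))
  have hform : star x ⬝ᵥ (δ • (1 : Matrix ι ι ℝ) - k • vecMulVec b b) *ᵥ x =
      δ * ∑ i, x i ^ 2 - k * (∑ i, b i * x i) ^ 2 := by
    rw [sub_mulVec, smul_mulVec, smul_mulVec, one_mulVec, vecMulVec_mulVec, dotProduct_sub,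
      dotProduct_smul, dotProduct_smul, star_trivial, op_smul_eq_smul, dotProduct_smul,
      dotProduct_comm x b]
    simp only [dotProduct, pow_two, smul_eq_mul]
  rw [hform, sub_nonneg]
  calc k * (∑ i, b i * x i) ^ 2
      ≤ k * ((∑ i, b i ^ 2) * ∑ i, x i ^ 2) := by
        gcongr
        exact Finset.sum_mul_sq_le_sq_mul_sq _ b x
    _ = (k * ∑ i, b i ^ 2) * ∑ i, x i ^ 2 := (mul_assoc ..).symm
    _ ≤ δ * ∑ i, x i ^ 2 := by gcongr

end QuadForm

open scoped MatrixOrder in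
lemma posSemidef_map_ofReal {ι : Type*} [Finite ι] {A : Matrix ι ι ℝ} (hA : A.PosSemidef) :
    (A.map Complex.ofReal).PosSemidef := by
  classical
  have := Fintype.ofFinite ι
  obtain ⟨B, rfl⟩ := CStarAlgebra.nonneg_iff_eq_star_mul_self.mp hA.nonneg
  convert posSemidef_conjTranspose_mul_self (B.map Complex.ofReal)
  ext i j
  simp [mul_apply, star_eq_conjTranspose]

open scoped MatrixOrder in
lemma eq_zero_of_posSemidef_of_posSemidef_neg {ι : Type*} {A : Matrix ι ι ℂ} (hA : A.PosSemidef)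
    (hA' : (-A).PosSemidef) : A = 0 :=
  le_antisymm (neg_nonneg.mp hA'.nonneg) hA.nonneg

lemma niKer_isHermitian (M : Matrix (Fin n) (Fin n) ℂ) : (niKer M).IsHermitian := by
  rw [IsHermitian, niKer, conjTranspose_smul, conjTranspose_sub, conjTranspose_conjTranspose,
    Complex.star_def, Complex.conj_I, neg_smul, ← smul_neg, neg_sub]

lemma niKer_add (M N : Matrix (Fin n) (Fin n) ℂ) : niKer (M + N) = niKer M + niKer N := by
  rw [niKer, niKer, niKer, conjTranspose_add, add_sub_add_comm, smul_add]

lemma I_mul_sub_star (z : ℂ) : Complex.I * (z - star z) = ((-2 * z.im : ℝ) : ℂ) := by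
  rw [Complex.star_def, Complex.sub_conj, mul_left_comm, Complex.I_mul_I, mul_neg_one, neg_mul,
    Complex.ofReal_neg]

lemma niKer_smul_of_isHermitian (z : ℂ) {A : Matrix (Fin n) (Fin n) ℂ} (hA : A.IsHermitian) :
    niKer (z • A) = (-2 * z.im) • A := by
  rw [niKer, conjTranspose_smul, hA.eq, ← sub_smul, smul_smul, I_mul_sub_star, Complex.coe_smul]

lemma quadForm_niKer (M : Matrix (Fin n) (Fin n) ℂ) (x : Fin n → ℂ) :
    quadForm (niKer M) x = ((-2 * (quadForm M x).im : ℝ) : ℂ) := by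
  rw [niKer, quadForm_smul, quadForm_sub, quadForm_conjTranspose, I_mul_sub_star]

lemma posSemidef_niKer_iff {M : Matrix (Fin n) (Fin n) ℂ} :
    (niKer M).PosSemidef ↔ ∀ x, (quadForm M x).im ≤ 0 := by
  simp only [posSemidef_iff_dotProduct_mulVec, ← quadForm.eq_def, quadForm_niKer,
    Complex.zero_le_real, niKer_isHermitian, true_and]
  exact forall_congr' fun x => by constructor <;> intro h <;> linarith

lemma posDef_niKer_iff {M : Matrix (Fin n) (Fin n) ℂ} :
    (niKer M).PosDef ↔ ∀ x, x ≠ 0 → (quadForm M x).im < 0 := by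
  simp only [posDef_iff_dotProduct_mulVec, ← quadForm.eq_def, quadForm_niKer,
    Complex.zero_lt_real, niKer_isHermitian, true_and]
  exact forall₂_congr fun x _ => by constructor <;> intro h <;> linarith

-- For real `A` the kernel is `j (A - Aᵀ)`, whose transpose is its negative.
lemma isSymm_of_posSemidef_niKer {A : Matrix (Fin n) (Fin n) ℝ}
    (hA : (niKer (A.map Complex.ofReal)).PosSemidef) : A.IsSymm := by
  have htranspose : (niKer (A.map Complex.ofReal))ᵀ = -niKer (A.map Complex.ofReal) := by
    ext i j
    simp only [niKer, transpose_apply, Matrix.neg_apply, Matrix.smul_apply, Matrix.sub_apply,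
      conjTranspose_apply, map_apply, Complex.star_def, Complex.conj_ofReal, smul_eq_mul]
    ring
  have hzero := eq_zero_of_posSemidef_of_posSemidef_neg hA (htranspose ▸ hA.transpose)
  ext i j
  simpa [niKer, sub_eq_zero] using congrFun₂ hzero j i

/-! ### Positivity of the real part on the right half-plane -/

section RightHalfPlane

variable {g : ℂ → ℂ}

lemma continuous_jw : Continuous jw := by
  unfold jw
  fun_prop

@[simp]
lemma re_jw (ω : ℝ) : (jw ω).re = 0 := by simp [jw]

lemma re_jw_mul (ω : ℝ) (z : ℂ) : (jw ω * z).re = -(ω * z.im) := by simp [jw]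

lemma im_jw_mul (ω : ℝ) (z : ℂ) : (jw ω * z).im = ω * z.re := by simp [jw]

lemma exists_eq_jw_of_re_eq_zero {s : ℂ} (hs : s.re = 0) : ∃ ω, s = jw ω :=
  ⟨s.im, by apply Complex.ext <;> simp [jw, hs]⟩

lemma norm_exp_neg_le_one_iff (z : ℂ) : ‖Complex.exp (-z)‖ ≤ 1 ↔ 0 ≤ z.re := by
  rw [Complex.norm_exp, Real.exp_le_one_iff, Complex.neg_re, neg_nonpos]

lemma diffContOnCl_exp_neg (hg : DiffContOnCl ℂ g {z | 0 < z.re}) :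
    DiffContOnCl ℂ (fun z => Complex.exp (-g z)) {z | 0 < z.re} :=
  Complex.differentiable_exp.comp_diffContOnCl hg.neg

lemma re_jw_nonneg_of_ne_zero (hg : DiffContOnCl ℂ g {z | 0 < z.re})
    (haxis : ∀ ω ≠ 0, 0 ≤ (g (jw ω)).re) (ω : ℝ) : 0 ≤ (g (jw ω)).re := by
  have hcont : Continuous fun ω : ℝ => (g (jw ω)).re := by
    have hmem : ∀ ω, jw ω ∈ closure {z : ℂ | 0 < z.re} := fun ω => by
      simp [Complex.closure_setOfPred_lt_re]
    exact Complex.continuous_re.comp (hg.continuousOn.comp_continuous continuous_jw hmem)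
  have hclosed : IsClosed {ω : ℝ | 0 ≤ (g (jw ω)).re} := isClosed_le continuous_const hcont
  exact hclosed.closure_subset_iff.mpr haxis ((dense_compl_singleton (0 : ℝ)) ω)

/- `Re g ≥ 0` is the bound `‖exp (-g)‖ ≤ 1`, which the Phragmén–Lindelöf principle carries from
the axis to the half-plane. -/
lemma re_nonneg_of_re_jw_nonneg {K : ℝ} (hg : DiffContOnCl ℂ g {z | 0 < z.re})
    (hbound : ∀ s, 0 ≤ s.re → ‖g s‖ ≤ K) (haxis : ∀ ω ≠ 0, 0 ≤ (g (jw ω)).re)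
    {s : ℂ} (hs : 0 ≤ s.re) : 0 ≤ (g s).re := by
  have hexp : ∀ z : ℂ, 0 ≤ z.re → ‖Complex.exp (-g z)‖ ≤ Real.exp K := fun z hz => by
    refine (Complex.norm_exp_le_exp_norm _).trans (Real.exp_le_exp.mpr ?_)
    exact (norm_neg _).trans_le (hbound z hz)
  rw [← norm_exp_neg_le_one_iff]
  refine PhragmenLindelof.right_half_plane_of_bounded_on_real (f := fun z => Complex.exp (-g z))
    (diffContOnCl_exp_neg hg) ⟨0, by norm_num, 0, ?_⟩ ⟨Real.exp K, ?_⟩ (fun ω => ?_) hs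
  · refine Asymptotics.IsBigO.of_bound (Real.exp K) (eventually_inf_principal.mpr ?_)
    exact Eventually.of_forall fun z hz => by simpa using hexp z (le_of_lt hz)
  · rw [eventually_map]
    filter_upwards [eventually_ge_atTop 0] with x hx using hexp x (by simpa using hx)
  · rw [norm_exp_neg_le_one_iff, mul_comm]
    exact re_jw_nonneg_of_ne_zero hg haxis ω

lemma re_pos_of_re_jw_pos {K : ℝ} (hg : DiffContOnCl ℂ g {z | 0 < z.re})
    (hbound : ∀ s, 0 ≤ s.re → ‖g s‖ ≤ K) (haxis : ∀ ω ≠ 0, 0 < (g (jw ω)).re)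
    {s : ℂ} (hs : 0 ≤ s.re) (hs0 : s ≠ 0) : 0 < (g s).re := by
  rcases hs.eq_or_lt with hre | hpos
  · obtain ⟨ω, rfl⟩ := exists_eq_jw_of_re_eq_zero hre.symm
    exact haxis ω fun hω => hs0 (by simp [jw, hω])
  have hnonneg : ∀ z : ℂ, 0 ≤ z.re → 0 ≤ (g z).re := fun z hz =>
    re_nonneg_of_re_jw_nonneg hg hbound (fun ω hω => (haxis ω hω).le) hz
  refine (hnonneg s hs).lt_of_ne fun hzero => ?_
  have hmax : IsMaxOn (norm ∘ fun z => Complex.exp (-g z)) {z : ℂ | 0 < z.re} s := by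
    intro z hz
    have hone : ‖Complex.exp (-g s)‖ = 1 := by simp [Complex.norm_exp, ← hzero]
    simpa only [Set.mem_ofPred_eq, Function.comp_apply, hone] using
      (norm_exp_neg_le_one_iff _).mpr (hnonneg z (le_of_lt hz))
  have hconst := Complex.norm_eqOn_closure_of_isPreconnected_of_isMaxOn
    (convex_halfSpace_re_gt 0).isPreconnected (isOpen_lt continuous_const Complex.continuous_re)
    (diffContOnCl_exp_neg hg) hpos hmax
  have hone : ‖Complex.exp (-g (jw 1))‖ = ‖Complex.exp (-g s)‖ :=
    hconst (by simp [Complex.closure_setOfPred_lt_re])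
  rw [Complex.norm_exp, Complex.norm_exp, Real.exp_eq_exp, Complex.neg_re, Complex.neg_re,
    neg_inj, ← hzero] at hone
  exact (haxis 1 one_ne_zero).ne' hone

end RightHalfPlane

/-! ### The ring of stable proper rational functions -/

section StableRing

lemma evalC_eq_aeval_div (f : RatFunc ℝ) (s : ℂ) :
    evalC f s = aeval s f.num / aeval s f.denom := rfl

lemma evalC_ofReal (f : RatFunc ℝ) (t : ℝ) :
    evalC f (t : ℂ) = ((f.eval (RingHom.id ℝ) t : ℝ) : ℂ) := by
  have haeval (p : ℝ[X]) : aeval (t : ℂ) p = ((p.eval t : ℝ) : ℂ) :=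
    aeval_algebraMap_apply_eq_algebraMap_eval t p
  rw [evalC_eq_aeval_div, haeval, haeval, ← Complex.ofReal_div]
  rfl

lemma evalC_conj (f : RatFunc ℝ) (s : ℂ) :
    evalC f (starRingEnd ℂ s) = starRingEnd ℂ (evalC f s) := by
  simp only [evalC_eq_aeval_div, aeval_conj, map_div₀]

lemma num_degree_le_denom_degree_iff {f : RatFunc ℝ} :
    f.num.degree ≤ f.denom.degree ↔ f.intDegree ≤ 0 := by
  rw [RatFunc.intDegree, degree_eq_natDegree f.denom_ne_zero, ← natDegree_le_iff_degree_le]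
  omega

lemma aeval_ne_zero_of_dvd {p q : ℝ[X]} {s : ℂ} (hpq : p ∣ q) (hq : aeval s q ≠ 0) :
    aeval s p ≠ 0 := by
  obtain ⟨r, rfl⟩ := hpq
  rw [map_mul] at hq
  exact left_ne_zero_of_mul hq

/-- The scalar `RH∞`: proper real-rational functions without poles in the closed right
half-plane, as a subring of the field of rational functions. -/
def stableRing : Subring (RatFunc ℝ) where
  carrier := {f | f.intDegree ≤ 0 ∧ ∀ s : ℂ, 0 ≤ s.re → aeval s f.denom ≠ 0}
  zero_mem' := by simp
  one_mem' := by simp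
  neg_mem' {f} hf := by
    refine ⟨f.intDegree_neg.trans_le hf.1, fun s hs => ?_⟩
    refine aeval_ne_zero_of_dvd ((RatFunc.denom_dvd f.denom_ne_zero).mpr ⟨-f.num, ?_⟩) (hf.2 s hs)
    rw [map_neg, neg_div, f.num_div_denom]
  add_mem' {f g} hf hg := by
    refine ⟨?_, fun s hs => aeval_ne_zero_of_dvd (RatFunc.denom_add_dvd f g) ?_⟩
    · by_cases hg0 : g = 0
      · simpa [hg0] using hf.1
      by_cases hfg0 : f + g = 0
      · simp [hfg0]
      exact (RatFunc.intDegree_add_le hg0 hfg0).trans (max_le hf.1 hg.1)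
    · rw [map_mul]
      exact mul_ne_zero (hf.2 s hs) (hg.2 s hs)
  mul_mem' {f g} hf hg := by
    refine ⟨?_, fun s hs => aeval_ne_zero_of_dvd (RatFunc.denom_mul_dvd f g) ?_⟩
    · by_cases hf0 : f = 0
      · simp [hf0]
      by_cases hg0 : g = 0
      · simp [hg0]
      rw [RatFunc.intDegree_mul hf0 hg0]
      exact add_nonpos hf.1 hg.1
    · rw [map_mul]
      exact mul_ne_zero (hf.2 s hs) (hg.2 s hs)

lemma mem_stableRing_iff {f : RatFunc ℝ} : f ∈ stableRing ↔
    f.num.degree ≤ f.denom.degree ∧ ∀ s : ℂ, 0 ≤ s.re → ¬ IsPoleAt f s := by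
  rw [num_degree_le_denom_degree_iff]
  rfl

lemma natDegree_num_le_natDegree_denom {f : RatFunc ℝ} (hf : f ∈ stableRing) :
    f.num.natDegree ≤ f.denom.natDegree :=
  natDegree_le_natDegree (mem_stableRing_iff.mp hf).1

lemma evalC_div {p q : ℝ[X]} {s : ℂ} (hq : aeval s q ≠ 0) :
    evalC (algebraMap ℝ[X] (RatFunc ℝ) p / algebraMap ℝ[X] (RatFunc ℝ) q) s =
      aeval s p / aeval s q := by
  set f := algebraMap ℝ[X] (RatFunc ℝ) p / algebraMap ℝ[X] (RatFunc ℝ) q with hf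
  have hq0 : q ≠ 0 := by rintro rfl; simp at hq
  have hcross := congrArg (aeval s) ((RatFunc.num_mul_eq_mul_denom_iff hq0).mpr hf)
  rw [map_mul, map_mul] at hcross
  rwa [evalC_eq_aeval_div, div_eq_div_iff (aeval_ne_zero_of_dvd (RatFunc.denom_div_dvd p q) hq) hq]

lemma div_mem_stableRing {p q : ℝ[X]} (hdeg : p.natDegree ≤ q.natDegree)
    (hq : ∀ s : ℂ, 0 ≤ s.re → aeval s q ≠ 0) :
    algebraMap ℝ[X] (RatFunc ℝ) p / algebraMap ℝ[X] (RatFunc ℝ) q ∈ stableRing := by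
  refine ⟨?_, fun s hs => aeval_ne_zero_of_dvd (RatFunc.denom_div_dvd p q) (hq s hs)⟩
  have hq0 : q ≠ 0 := by
    rintro rfl
    simpa using hq 0
  by_cases hp0 : p = 0
  · simp [hp0]
  rw [div_eq_mul_inv, RatFunc.intDegree_mul (by simpa using hp0) (by simpa using hq0),
    RatFunc.intDegree_inv, RatFunc.intDegree_polynomial, RatFunc.intDegree_polynomial]
  omega

lemma atInfinity_eq_coeff {f : RatFunc ℝ} (hf : f ∈ stableRing) :
    atInfinity f = f.num.coeff f.denom.natDegree := by
  rw [atInfinity]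
  split_ifs with hdeg
  · rw [f.monic_denom.leadingCoeff, div_one, leadingCoeff, natDegree_eq_of_degree_eq hdeg]
  · refine (coeff_eq_zero_of_degree_lt ?_).symm
    rw [← degree_eq_natDegree f.denom_ne_zero]
    exact (mem_stableRing_iff.mp hf).1.lt_of_ne hdeg

lemma atInfinity_div {p q : ℝ[X]} (hdeg : p.natDegree ≤ q.natDegree)
    (hq : ∀ s : ℂ, 0 ≤ s.re → aeval s q ≠ 0) :
    atInfinity (algebraMap ℝ[X] (RatFunc ℝ) p / algebraMap ℝ[X] (RatFunc ℝ) q) =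
      p.coeff q.natDegree / q.leadingCoeff := by
  have hmem := div_mem_stableRing hdeg hq
  set f := algebraMap ℝ[X] (RatFunc ℝ) p / algebraMap ℝ[X] (RatFunc ℝ) q with hf
  have hq0 : q ≠ 0 := by
    rintro rfl
    simpa using hq 0
  have hcross := congrArg (coeff · (f.denom.natDegree + q.natDegree))
    ((RatFunc.num_mul_eq_mul_denom_iff hq0).mpr hf)
  simp only [mul_comm p f.denom] at hcross
  rw [coeff_mul_add_eq_of_natDegree_le (natDegree_num_le_natDegree_denom hmem) le_rfl,
    coeff_mul_add_eq_of_natDegree_le le_rfl hdeg, coeff_natDegree, coeff_natDegree,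
    f.monic_denom.leadingCoeff, one_mul] at hcross
  rw [atInfinity_eq_coeff hmem, eq_div_iff (leadingCoeff_ne_zero.mpr hq0), hcross]

lemma tendsto_evalC_ofReal_atInfinity {f : RatFunc ℝ} (hf : f ∈ stableRing) :
    Tendsto (fun t : ℝ => evalC f t) atTop (𝓝 (atInfinity f : ℂ)) := by
  simp only [evalC_ofReal]
  refine (Complex.continuous_ofReal.tendsto _).comp ?_
  rw [atInfinity]
  split_ifs with hdeg
  · exact div_tendsto_atTop_leadingCoeff_div_of_degree_eq _ _ hdeg
  · exact div_tendsto_atTop_zero_of_degree_lt _ _ ((mem_stableRing_iff.mp hf).1.lt_of_ne hdeg)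

/-- Evaluation at a point of the closed right half-plane. -/
def evalHom (s : ℂ) (hs : 0 ≤ s.re) : stableRing →+* ℂ where
  toFun f := evalC f s
  map_zero' := by simp [evalC]
  map_one' := by simp [evalC]
  map_add' f g := RatFunc.eval_add _ _ (f.2.2 s hs) (g.2.2 s hs)
  map_mul' f g := RatFunc.eval_mul _ _ (f.2.2 s hs) (g.2.2 s hs)

/-- Evaluation at infinity. -/
def atInfinityHom : stableRing →+* ℝ where
  toFun f := atInfinity f
  map_zero' := by simp [atInfinity]
  map_one' := by simp [atInfinity]
  map_add' f g := by
    have hlim := (tendsto_evalC_ofReal_atInfinity f.2).add (tendsto_evalC_ofReal_atInfinity g.2)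
    refine Complex.ofReal_injective (Eq.trans ?_ (Complex.ofReal_add _ _).symm)
    refine tendsto_nhds_unique (tendsto_evalC_ofReal_atInfinity (f + g).2) (hlim.congr' ?_)
    filter_upwards [eventually_ge_atTop 0] with t ht
    exact (map_add (evalHom t (by simpa using ht)) f g).symm
  map_mul' f g := by
    have hlim := (tendsto_evalC_ofReal_atInfinity f.2).mul (tendsto_evalC_ofReal_atInfinity g.2)
    refine Complex.ofReal_injective (Eq.trans ?_ (Complex.ofReal_mul _ _).symm)
    refine tendsto_nhds_unique (tendsto_evalC_ofReal_atInfinity (f * g).2) (hlim.congr' ?_)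
    filter_upwards [eventually_ge_atTop 0] with t ht
    exact (map_mul (evalHom t (by simpa using ht)) f g).symm

lemma inv_mem_stableRing {f : RatFunc ℝ} (hf : f ∈ stableRing)
    (heval : ∀ s : ℂ, 0 ≤ s.re → evalC f s ≠ 0) (hinf : atInfinity f ≠ 0) :
    f⁻¹ ∈ stableRing := by
  have hnum (s : ℂ) (hs : 0 ≤ s.re) : aeval s f.num ≠ 0 :=
    left_ne_zero_of_mul (a := aeval s f.num) (b := (aeval s f.denom)⁻¹) (heval s hs)
  have hdeg : f.denom.natDegree ≤ f.num.natDegree :=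
    le_natDegree_of_ne_zero (atInfinity_eq_coeff hf ▸ hinf)
  rw [← f.num_div_denom, inv_div]
  exact div_mem_stableRing hdeg hnum

lemma isUnit_stableRing_iff {f : stableRing} :
    IsUnit f ↔ (∀ s : ℂ, 0 ≤ s.re → evalC f s ≠ 0) ∧ atInfinity f ≠ 0 := by
  refine ⟨fun hf => ⟨fun s hs => (hf.map (evalHom s hs)).ne_zero,
    (hf.map atInfinityHom).ne_zero⟩, fun ⟨heval, hinf⟩ => ?_⟩
  have hf0 : (f : RatFunc ℝ) ≠ 0 := by
    intro hzero
    exact hinf (by simp [hzero, atInfinity])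
  exact IsUnit.of_mul_eq_one ⟨_, inv_mem_stableRing f.2 heval hinf⟩
    (Subtype.ext (mul_inv_cancel₀ hf0))

lemma differentiableAt_evalC {f : RatFunc ℝ} (hf : f ∈ stableRing) {s : ℂ} (hs : 0 ≤ s.re) :
    DifferentiableAt ℂ (evalC f) s :=
  f.num.differentiableAt_aeval.div f.denom.differentiableAt_aeval (hf.2 s hs)

lemma exists_forall_norm_evalC_le {f : RatFunc ℝ} (hf : f ∈ stableRing) :
    ∃ K, ∀ s : ℂ, 0 ≤ s.re → ‖evalC f s‖ ≤ K := by
  have hdeg : (f.num.map (algebraMap ℝ ℂ)).degree ≤ (f.denom.map (algebraMap ℝ ℂ)).degree := by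
    simpa only [degree_map] using (mem_stableRing_iff.mp hf).1
  obtain ⟨B, hB⟩ := (isBigO_cobounded_of_degree_le hdeg).bound
  rw [Metric.cobounded_eq_cocompact, Filter.eventually_iff, mem_cocompact] at hB
  obtain ⟨S, hS, hfar⟩ := hB
  have hclosed : IsClosed {z : ℂ | 0 ≤ z.re} := isClosed_le continuous_const Complex.continuous_re
  obtain ⟨A, hA⟩ := (hS.inter_right hclosed).exists_bound_of_continuousOn
    fun z hz => (differentiableAt_evalC hf hz.2).continuousAt.continuousWithinAt
  refine ⟨max A B, fun s hs => ?_⟩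
  by_cases hsS : s ∈ S
  · exact (hA s ⟨hsS, hs⟩).trans (le_max_left _ _)
  · have hratio : ‖aeval s f.num‖ ≤ B * ‖aeval s f.denom‖ := by
      simpa only [eval_map_algebraMap, Set.mem_ofPred_eq] using hfar hsS
    rw [evalC_eq_aeval_div, norm_div, div_le_iff₀ (norm_pos_iff.mpr (hf.2 s hs))]
    exact hratio.trans (by gcongr; exact le_max_right _ _)

-- Subtracting the value at `0` makes the numerator divisible by `X`.
lemma exists_mem_stableRing_mul_evalC_eq {f : RatFunc ℝ} (hf : f ∈ stableRing) :
    ∃ g ∈ stableRing, ∀ s : ℂ, 0 ≤ s.re → s * evalC g s = evalC f 0 - evalC f s := by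
  obtain ⟨r, hr⟩ : ∃ r : ℝ, evalC f 0 = r := ⟨_, mod_cast evalC_ofReal f 0⟩
  set p := C r * f.denom - f.num with hp
  have haeval (s : ℂ) : aeval s p = r * aeval s f.denom - aeval s f.num := by simp [hp]
  have hcoeff : p.coeff 0 = 0 := by
    have hden := hf.2 0 le_rfl
    rw [← Complex.ofReal_eq_zero, ← Complex.coe_algebraMap, coeff_zero_eq_aeval_zero', haeval, ← hr,
      evalC_eq_aeval_div, div_mul_cancel₀ _ hden, sub_self]
  have hdeg : p.divX.natDegree ≤ f.denom.natDegree := by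
    rw [natDegree_divX_eq_natDegree_tsub_one]
    refine (Nat.sub_le _ _).trans ((natDegree_sub_le _ _).trans (max_le ?_ ?_))
    · exact natDegree_C_mul_le _ _
    · exact natDegree_num_le_natDegree_denom hf
  refine ⟨_, div_mem_stableRing hdeg hf.2, fun s hs => ?_⟩
  have hden := hf.2 s hs
  have hdivX : s * aeval s p.divX = aeval s p := by
    conv_rhs => rw [← divX_mul_X_add p, hcoeff]
    simp [mul_comm]
  rw [evalC_div hden, hr, evalC_eq_aeval_div, ← mul_div_assoc, hdivX, haeval, sub_div,
    mul_div_cancel_right₀ _ hden]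

-- Subtracting the value at infinity drops the degree of the numerator.
lemma exists_mem_stableRing_evalC_eq_mul {f : RatFunc ℝ} (hf : f ∈ stableRing) :
    ∃ g ∈ stableRing, ∀ s : ℂ, 0 ≤ s.re → evalC g s = s * (evalC f s - atInfinity f) := by
  set p := f.num - C (atInfinity f) * f.denom with hp
  have hdeg : (X * p).natDegree ≤ f.denom.natDegree := by
    refine natDegree_le_iff_coeff_eq_zero.mpr fun m hm => ?_
    obtain ⟨k, rfl⟩ := Nat.exists_eq_succ_of_ne_zero (Nat.ne_zero_of_lt hm)
    rw [coeff_X_mul, hp, coeff_sub, coeff_C_mul]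
    rcases (Nat.le_of_lt_succ hm).eq_or_lt with rfl | hlt
    · rw [coeff_natDegree, f.monic_denom.leadingCoeff, atInfinity_eq_coeff hf, mul_one, sub_self]
    · rw [coeff_eq_zero_of_natDegree_lt hlt, mul_zero, sub_zero,
        coeff_eq_zero_of_natDegree_lt ((natDegree_num_le_natDegree_denom hf).trans_lt hlt)]
  refine ⟨_, div_mem_stableRing hdeg hf.2, fun s hs => ?_⟩
  have hden := hf.2 s hs
  rw [evalC_div hden, evalC_eq_aeval_div]
  simp only [hp, map_mul, map_sub, aeval_X, aeval_C, Complex.coe_algebraMap]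
  field_simp

end StableRing

/-! ### Stable proper transfer matrices -/

section TransferMatrix

variable {G P C : Matrix (Fin n) (Fin n) (RatFunc ℝ)}

lemma memRHinf_iff {m : Type*} [Fintype m] {G : Matrix m m (RatFunc ℝ)} :
    MemRHinf G ↔ ∀ i j, G i j ∈ stableRing := by
  simp only [MemRHinf, mem_stableRing_iff]
  exact ⟨fun h i j => ⟨h.1 i j, fun s hs => h.2 s hs i j⟩,
    fun h => ⟨fun i j => (h i j).1, fun s hs i j => (h i j).2 s hs⟩⟩

lemma memRHinf_map_subtype {m : Type*} [Fintype m] (G : Matrix m m stableRing) :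
    MemRHinf (G.map stableRing.subtype) :=
  memRHinf_iff.mpr fun i j => (G i j).2

lemma MemRHinf.exists_eq_map_subtype {m : Type*} [Fintype m] {G : Matrix m m (RatFunc ℝ)}
    (hG : MemRHinf G) : ∃ G' : Matrix m m stableRing, G = G'.map stableRing.subtype :=
  ⟨of fun i j => ⟨G i j, memRHinf_iff.mp hG i j⟩, rfl⟩

lemma MemRHinf.add {m : Type*} [Fintype m] {G H : Matrix m m (RatFunc ℝ)} (hG : MemRHinf G)
    (hH : MemRHinf H) : MemRHinf (G + H) :=
  memRHinf_iff.mpr fun i j => add_mem (memRHinf_iff.mp hG i j) (memRHinf_iff.mp hH i j)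

lemma MemRHinf.evalM_add {H : Matrix (Fin n) (Fin n) (RatFunc ℝ)} (hG : MemRHinf G)
    (hH : MemRHinf H) {s : ℂ} (hs : 0 ≤ s.re) : evalM (G + H) s = evalM G s + evalM H s := by
  ext i j
  exact map_add (evalHom s hs) ⟨_, memRHinf_iff.mp hG i j⟩ ⟨_, memRHinf_iff.mp hH i j⟩

lemma MemRHinf.evalInf_add {H : Matrix (Fin n) (Fin n) (RatFunc ℝ)} (hG : MemRHinf G)
    (hH : MemRHinf H) : evalInf (G + H) = evalInf G + evalInf H := by
  ext i j
  exact map_add atInfinityHom ⟨_, memRHinf_iff.mp hG i j⟩ ⟨_, memRHinf_iff.mp hH i j⟩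

lemma evalM_ofReal (G : Matrix (Fin n) (Fin n) (RatFunc ℝ)) (t : ℝ) :
    evalM G t = (evalR G t).map Complex.ofReal := by
  ext i j
  exact evalC_ofReal _ _

lemma evalM_zero (G : Matrix (Fin n) (Fin n) (RatFunc ℝ)) :
    evalM G 0 = (evalR G 0).map Complex.ofReal :=
  mod_cast evalM_ofReal G 0

lemma MemRHinf.differentiableAt_quadForm (hG : MemRHinf G) (x : Fin n → ℂ) {s : ℂ}
    (hs : 0 ≤ s.re) : DifferentiableAt ℂ (fun z => quadForm (evalM G z) x) s := by
  simp only [quadForm_eq_sum]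
  refine DifferentiableAt.fun_sum fun i _ => DifferentiableAt.fun_sum fun j _ => ?_
  exact ((differentiableAt_evalC (memRHinf_iff.mp hG i j) hs).mul_const _).const_mul _

lemma MemRHinf.diffContOnCl_quadForm (hG : MemRHinf G) (x : Fin n → ℂ) :
    DiffContOnCl ℂ (fun z => quadForm (evalM G z) x) {z | 0 < z.re} := by
  refine DifferentiableOn.diffContOnCl fun z hz => ?_
  rw [Complex.closure_setOfPred_lt_re] at hz
  exact (hG.differentiableAt_quadForm x hz).differentiableWithinAt

lemma MemRHinf.exists_forall_norm_quadForm_le (hG : MemRHinf G) (x : Fin n → ℂ) :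
    ∃ K, ∀ s : ℂ, 0 ≤ s.re → ‖quadForm (evalM G s) x‖ ≤ K := by
  choose K hK using fun i j => exists_forall_norm_evalC_le (memRHinf_iff.mp hG i j)
  refine ⟨∑ i, ∑ j, ‖star (x i)‖ * (K i j * ‖x j‖), fun s hs => ?_⟩
  rw [quadForm_eq_sum]
  refine norm_sum_le_of_le _ fun i _ => norm_sum_le_of_le _ fun j _ => ?_
  rw [norm_mul, norm_mul]
  gcongr
  exact hK i j s hs

lemma MemRHinf.re_quadForm_nonneg (hG : MemRHinf G) {x : Fin n → ℂ}
    (haxis : ∀ ω ≠ 0, 0 ≤ (quadForm (evalM G (jw ω)) x).re) {s : ℂ} (hs : 0 ≤ s.re) :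
    0 ≤ (quadForm (evalM G s) x).re := by
  obtain ⟨K, hK⟩ := hG.exists_forall_norm_quadForm_le x
  exact re_nonneg_of_re_jw_nonneg (hG.diffContOnCl_quadForm x) hK haxis hs

lemma MemRHinf.re_quadForm_pos (hG : MemRHinf G) {x : Fin n → ℂ}
    (haxis : ∀ ω ≠ 0, 0 < (quadForm (evalM G (jw ω)) x).re) {s : ℂ} (hs : 0 ≤ s.re)
    (hs0 : s ≠ 0) : 0 < (quadForm (evalM G s) x).re := by
  obtain ⟨K, hK⟩ := hG.exists_forall_norm_quadForm_le x
  exact re_pos_of_re_jw_pos (hG.diffContOnCl_quadForm x) hK haxis hs hs0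

lemma MemRHinf.exists_smul_evalM_eq (hG : MemRHinf G) : ∃ H : Matrix (Fin n) (Fin n) (RatFunc ℝ),
    MemRHinf H ∧ ∀ s : ℂ, 0 ≤ s.re → s • evalM H s = evalM G 0 - evalM G s := by
  choose H hmem hH using fun i j => exists_mem_stableRing_mul_evalC_eq (memRHinf_iff.mp hG i j)
  exact ⟨of H, memRHinf_iff.mpr hmem, fun s hs => Matrix.ext fun i j => hH i j s hs⟩

lemma MemRHinf.exists_evalM_eq_smul (hG : MemRHinf G) : ∃ H : Matrix (Fin n) (Fin n) (RatFunc ℝ),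
    MemRHinf H ∧
      ∀ s : ℂ, 0 ≤ s.re → evalM H s = s • (evalM G s - (evalInf G).map Complex.ofReal) := by
  choose H hmem hH using fun i j => exists_mem_stableRing_evalC_eq_mul (memRHinf_iff.mp hG i j)
  exact ⟨of H, memRHinf_iff.mpr hmem, fun s hs => Matrix.ext fun i j => hH i j s hs⟩

lemma MemRHinf.tendsto_quadForm_ofReal_atTop (hG : MemRHinf G) (x : Fin n → ℂ) :
    Tendsto (fun t : ℝ => quadForm (evalM G t) x) atTop
      (𝓝 (quadForm ((evalInf G).map Complex.ofReal) x)) := by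
  simp only [quadForm_eq_sum]
  refine tendsto_finsetSum _ fun i _ => tendsto_finsetSum _ fun j _ => ?_
  exact ((tendsto_evalC_ofReal_atInfinity (memRHinf_iff.mp hG i j)).mul_const _).const_mul _

lemma feedbackStable_map_subtype_iff {P C : Matrix (Fin n) (Fin n) stableRing} :
    FeedbackStable (P.map stableRing.subtype) (C.map stableRing.subtype) ↔
      IsUnit (1 - P * C).det := by
  set φ : Matrix (Fin n) (Fin n) stableRing →+* Matrix (Fin n) (Fin n) (RatFunc ℝ) :=
    stableRing.subtype.mapMatrix with hφ
  have hmap : 1 - φ P * φ C = φ (1 - P * C) := by rw [map_sub, map_one, map_mul]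
  change FeedbackStable (φ P) (φ C) ↔ _
  rw [FeedbackStable, hmap]
  constructor
  · rintro ⟨hdet, hmem⟩
    have hinv : MemRHinf (φ (1 - P * C))⁻¹ :=
      memRHinf_iff.mpr fun i j => memRHinf_iff.mp hmem (Sum.inl i) (Sum.inl j)
    obtain ⟨K, hK⟩ := hinv.exists_eq_map_subtype
    have hφinj : Function.Injective φ := map_injective Subtype.val_injective
    refine isUnit_det_of_right_inverse (B := K) (hφinj ?_)
    rw [map_mul, map_one, show φ K = _ from hK.symm, mul_nonsing_inv _ hdet.isUnit]
  · intro hunit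
    have hinv : (φ (1 - P * C))⁻¹ = φ (1 - P * C)⁻¹ :=
      inv_eq_right_inv (by rw [← map_mul, mul_nonsing_inv _ hunit, map_one])
    refine ⟨?_, ?_⟩
    · rw [hφ, ← RingHom.map_det]
      exact (hunit.map stableRing.subtype).ne_zero
    · rw [hinv, ← map_mul, ← map_mul, ← map_mul]
      exact fromBlocks_map (1 - P * C)⁻¹ ((1 - P * C)⁻¹ * P) (C * (1 - P * C)⁻¹)
        (C * (1 - P * C)⁻¹ * P) stableRing.subtype ▸ memRHinf_map_subtype _

-- The determinant of `1 - P C` is a unit of the ring of stable functions exactly when it vanishes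
-- neither on the closed right half-plane nor at infinity.
lemma feedbackStable_iff (hP : MemRHinf P) (hC : MemRHinf C) : FeedbackStable P C ↔
    (∀ s : ℂ, 0 ≤ s.re → (1 - evalM P s * evalM C s).det ≠ 0) ∧
      (1 - evalInf P * evalInf C).det ≠ 0 := by
  obtain ⟨P, rfl⟩ := hP.exists_eq_map_subtype
  obtain ⟨C, rfl⟩ := hC.exists_eq_map_subtype
  have hmap {R : Type} [CommRing R] (φ : stableRing →+* R) :
      φ (1 - P * C).det = (1 - φ.mapMatrix P * φ.mapMatrix C).det := by
    rw [RingHom.map_det, map_sub, map_one, map_mul]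
  rw [feedbackStable_map_subtype_iff, isUnit_stableRing_iff]
  refine and_congr (forall₂_congr fun s hs => not_congr ?_) (not_congr ?_)
  · exact Eq.congr_left (hmap (evalHom s hs))
  · exact Eq.congr_left (hmap atInfinityHom)

lemma isNI_iff_of_memRHinf (hG : MemRHinf G) :
    IsNI G ↔ ∀ ω, 0 < ω → (niKer (evalM G (jw ω))).PosSemidef := by
  have hpole (s : ℂ) (hs : 0 ≤ s.re) : ¬ HasPole G s := fun ⟨i, j, hij⟩ => hG.2 s hs i j hij
  refine ⟨fun h ω hω => h.2.2.1 ω hω (hpole _ (re_jw ω).ge), fun h => ?_⟩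
  refine ⟨hG.1, fun s hs => hpole s hs.le, fun ω hω _ => h ω hω, fun ω _ hω => ?_, fun h0 => ?_⟩
  · exact absurd hω (hpole _ (re_jw ω).ge)
  · exact absurd h0 (hpole 0 le_rfl)

end TransferMatrix

/-! ### Negative imaginary matrices on the right half-plane -/

section NegativeImaginary

variable {G P C : Matrix (Fin n) (Fin n) (RatFunc ℝ)}

lemma jw_neg (ω : ℝ) : jw (-ω) = starRingEnd ℂ (jw ω) := by simp [jw]

lemma quadForm_evalM_conj (G : Matrix (Fin n) (Fin n) (RatFunc ℝ)) (s : ℂ) (x : Fin n → ℂ) :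
    quadForm (evalM G (starRingEnd ℂ s)) x = starRingEnd ℂ (quadForm (evalM G s) (star x)) := by
  simp [quadForm_eq_sum, evalM, evalC_conj]

lemma mul_im_quadForm_nonpos (hG : ∀ ω, 0 < ω → (niKer (evalM G (jw ω))).PosSemidef) (ω : ℝ)
    (x : Fin n → ℂ) : ω * (quadForm (evalM G (jw ω)) x).im ≤ 0 := by
  rcases lt_trichotomy ω 0 with hneg | rfl | hpos
  · have him := posSemidef_niKer_iff.mp (hG (-ω) (neg_pos.mpr hneg)) (star x)
    rw [← neg_neg ω, jw_neg, quadForm_evalM_conj, Complex.conj_im, neg_mul_neg]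
    exact mul_nonpos_of_nonneg_of_nonpos (neg_pos.mpr hneg).le him
  · rw [zero_mul]
  · exact mul_nonpos_of_nonneg_of_nonpos hpos.le (posSemidef_niKer_iff.mp (hG ω hpos) x)

lemma IsSNI.mul_im_quadForm_neg (hG : IsSNI G) {ω : ℝ} (hω : ω ≠ 0) {x : Fin n → ℂ}
    (hx : x ≠ 0) : ω * (quadForm (evalM G (jw ω)) x).im < 0 := by
  rcases hω.lt_or_gt with hneg | hpos
  · have him := posDef_niKer_iff.mp (hG.2 (-ω) (neg_pos.mpr hneg)) (star x) (star_ne_zero.mpr hx)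
    rw [← neg_neg ω, jw_neg, quadForm_evalM_conj, Complex.conj_im, neg_mul_neg]
    exact mul_neg_of_pos_of_neg (neg_pos.mpr hneg) him
  · exact mul_neg_of_pos_of_neg hpos (posDef_niKer_iff.mp (hG.2 ω hpos) x hx)

lemma quadForm_evalM_zero_nonpos (hG : LoewnerLE (evalR G 0) 0) (x : Fin n → ℂ) :
    quadForm (evalM G 0) x ≤ 0 := by
  have hnonneg := (posSemidef_map_ofReal hG).dotProduct_mulVec_nonneg x
  have hmap : (0 - evalR G 0).map Complex.ofReal = -evalM G 0 := by
    rw [evalM_zero, zero_sub]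
    ext i j
    simp
  rwa [hmap, ← quadForm.eq_def, quadForm_neg, neg_nonneg] at hnonneg

-- With `s H(s) = G(0) - G(s)`, the form of `H` has nonnegative real part on the axis.
lemma re_conj_mul_quadForm_nonpos (hG : MemRHinf G)
    (hNI : ∀ ω, 0 < ω → (niKer (evalM G (jw ω))).PosSemidef) (hzero : LoewnerLE (evalR G 0) 0)
    {s : ℂ} (hs : 0 ≤ s.re) (x : Fin n → ℂ) :
    (starRingEnd ℂ s * quadForm (evalM G s) x).re ≤ 0 := by
  obtain ⟨H, hH, hGH⟩ := hG.exists_smul_evalM_eq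
  obtain ⟨hre0, him0⟩ := Complex.nonpos_iff.mp (quadForm_evalM_zero_nonpos hzero x)
  have hform (z : ℂ) (hz : 0 ≤ z.re) :
      quadForm (evalM G z) x = quadForm (evalM G 0) x - z * quadForm (evalM H z) x := by
    rw [← quadForm_smul, hGH z hz, quadForm_sub, sub_sub_cancel]
  have haxis (ω : ℝ) (hω : ω ≠ 0) : 0 ≤ (quadForm (evalM H (jw ω)) x).re := by
    have him := mul_im_quadForm_nonpos hNI ω x
    rw [hform _ (re_jw ω).ge, Complex.sub_im, him0, im_jw_mul, zero_sub, mul_neg, neg_nonpos,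
      ← mul_assoc] at him
    exact nonneg_of_mul_nonneg_right him (mul_self_pos.mpr hω)
  have hHs := hH.re_quadForm_nonneg haxis hs
  have hexpand : (starRingEnd ℂ s * quadForm (evalM G s) x).re =
      s.re * (quadForm (evalM G 0) x).re - Complex.normSq s * (quadForm (evalM H s) x).re := by
    rw [hform s hs, mul_sub, ← mul_assoc, mul_comm _ s, Complex.mul_conj]
    simp [him0]
  rw [hexpand]
  exact sub_nonpos.mpr ((mul_nonpos_of_nonneg_of_nonpos hs hre0).trans
    (mul_nonneg (Complex.normSq_nonneg s) hHs))

lemma IsSNI.re_mul_quadForm_pos (hG : IsSNI G) (hinf : (evalInf G).PosSemidef) {s : ℂ}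
    (hs : 0 ≤ s.re) (hs0 : s ≠ 0) {x : Fin n → ℂ} (hx : x ≠ 0) :
    0 < (s * quadForm (evalM G s) x).re := by
  obtain ⟨H, hH, hHG⟩ := hG.1.exists_evalM_eq_smul
  set w := quadForm ((evalInf G).map Complex.ofReal) x with hw
  obtain ⟨hre, him⟩ := Complex.nonneg_iff.mp
    ((posSemidef_map_ofReal hinf).dotProduct_mulVec_nonneg x)
  rw [← quadForm.eq_def, ← hw] at hre him
  have hform (z : ℂ) (hz : 0 ≤ z.re) :
      quadForm (evalM H z) x = z * quadForm (evalM G z) x - z * w := by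
    rw [hHG z hz, quadForm_smul, quadForm_sub, mul_sub]
  have haxis (ω : ℝ) (hω : ω ≠ 0) : 0 < (quadForm (evalM H (jw ω)) x).re := by
    rw [hform _ (re_jw ω).ge, Complex.sub_re, re_jw_mul, re_jw_mul, ← him, mul_zero, neg_zero,
      sub_zero, neg_pos]
    exact hG.mul_im_quadForm_neg hω hx
  have hHs := hH.re_quadForm_pos haxis hs hs0
  rw [hform s hs, Complex.sub_re, sub_pos, Complex.mul_re s w, ← him, mul_zero, sub_zero] at hHs
  exact (mul_nonneg hs hre).trans_lt hHs

lemma re_quadForm_evalM_ofReal (G : Matrix (Fin n) (Fin n) (RatFunc ℝ)) (t : ℝ)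
    (x : Fin n → ℝ) :
    (quadForm (evalM G t) (Complex.ofReal ∘ x)).re = quadForm (evalR G t) x := by
  rw [evalM_ofReal, quadForm_map_ofReal, Complex.ofReal_re]

lemma IsSNI.quadForm_evalR_zero_nonneg (hG : IsSNI G) (hinf : (evalInf G).PosSemidef)
    (x : Fin n → ℝ) : 0 ≤ quadForm (evalR G 0) x := by
  rcases eq_or_ne x 0 with rfl | hx
  · simp [quadForm]
  have hx' : Complex.ofReal ∘ x ≠ 0 := fun h => hx (funext fun i => by simpa using congrFun h i)
  have hform : ContinuousAt (fun s => quadForm (evalM G s) (Complex.ofReal ∘ x)) (0 : ℝ) :=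
    (hG.1.differentiableAt_quadForm _ (by simp)).continuousAt
  have hcont : ContinuousAt (fun t : ℝ => (quadForm (evalM G t) (Complex.ofReal ∘ x)).re) 0 :=
    Complex.continuous_re.continuousAt.comp
      (ContinuousAt.comp (f := Complex.ofReal) hform Complex.continuous_ofReal.continuousAt)
  simp only [re_quadForm_evalM_ofReal] at hcont
  refine ge_of_tendsto (hcont.tendsto.mono_left (nhdsWithin_le_nhds (s := Set.Ioi 0))) ?_
  filter_upwards [self_mem_nhdsWithin] with t ht
  have hpos := hG.re_mul_quadForm_pos hinf (s := t) (by simpa using le_of_lt ht)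
    (by simpa using ht.ne') hx'
  rw [Complex.re_ofReal_mul, re_quadForm_evalM_ofReal] at hpos
  exact (pos_of_mul_pos_right hpos ht.le).le

lemma quadForm_evalInf_nonpos (hG : MemRHinf G)
    (hNI : ∀ ω, 0 < ω → (niKer (evalM G (jw ω))).PosSemidef) (hzero : LoewnerLE (evalR G 0) 0)
    (x : Fin n → ℝ) : quadForm (evalInf G) x ≤ 0 := by
  have hlim := (Complex.continuous_re.tendsto _).comp
    (hG.tendsto_quadForm_ofReal_atTop (Complex.ofReal ∘ x))
  rw [quadForm_map_ofReal, Complex.ofReal_re] at hlim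
  refine le_of_tendsto hlim ?_
  filter_upwards [eventually_gt_atTop 0] with t ht
  have hnonpos := re_conj_mul_quadForm_nonpos hG hNI hzero (s := t) (by simpa using ht.le)
    (Complex.ofReal ∘ x)
  rw [Complex.conj_ofReal, Complex.re_ofReal_mul] at hnonpos
  exact nonpos_of_mul_nonpos_right hnonpos ht

lemma IsSNI.det_one_sub_evalM_mul_zero_ne_zero (hP : IsSNI P) (hinf : (evalInf P).PosSemidef)
    (hzero : LoewnerLE (evalR C 0) 0) : (1 - evalM P 0 * evalM C 0).det ≠ 0 := by
  have hdet : (1 - (0 - evalR C 0) * -evalR P 0).det ≠ 0 :=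
    det_one_sub_mul_ne_zero hzero fun x => by
      rw [quadForm_neg, neg_nonpos]
      exact hP.quadForm_evalR_zero_nonneg hinf x
  rw [zero_sub, neg_mul_neg, det_one_sub_mul_comm, ← Complex.ofReal_ne_zero,
    ← Complex.ofRealHom_eq_coe, RingHom.map_det, map_sub, map_one, map_mul] at hdet
  rwa [evalM_zero, evalM_zero]

lemma IsSNI.feedbackStable (hP : IsSNI P) (hinf : (evalInf P).PosSemidef) (hC : MemRHinf C)
    (hNI : ∀ ω, 0 < ω → (niKer (evalM C (jw ω))).PosSemidef) (hzero : LoewnerLE (evalR C 0) 0) :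
    FeedbackStable P C := by
  refine (feedbackStable_iff hP.1 hC).mpr ⟨fun s hs => ?_,
    det_one_sub_mul_ne_zero hinf (quadForm_evalInf_nonpos hC hNI hzero)⟩
  rcases eq_or_ne s 0 with rfl | hs0
  · exact hP.det_one_sub_evalM_mul_zero_ne_zero hinf hzero
  intro hdet
  obtain ⟨x, hx0, hx⟩ := det_one_sub_mul_eq_zero_iff.mp hdet
  have hy0 : evalM C s *ᵥ x ≠ 0 := by
    intro hy
    rw [hy, mulVec_zero] at hx
    exact hx0 hx.symm
  have hpos := hP.re_mul_quadForm_pos hinf hs hs0 hy0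
  have hnonpos := re_conj_mul_quadForm_nonpos hC hNI hzero hs x
  rw [quadForm_mulVec_of_fixed hx, ← Complex.conj_re, map_mul, Complex.star_def,
    Complex.conj_conj] at hpos
  exact hpos.not_ge hnonpos

end NegativeImaginary

/-! ### Destabilizing strictly negative imaginary matrices -/

section Destabilization

variable {C : Matrix (Fin n) (Fin n) (RatFunc ℝ)}

/-- The resonant mode `k (a + s b) (a - s b)ᵀ / (s² + c s + d)`. On the imaginary axis the second
vector is the conjugate of the first, so the value there is a multiple of a Hermitian rank-one
matrix. -/
def modeMatrix (k c d : ℝ) (a b : Fin n → ℝ) : Matrix (Fin n) (Fin n) (RatFunc ℝ) :=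
  of fun i j =>
    algebraMap ℝ[X] (RatFunc ℝ) (.C k * ((.C (a i) + .C (b i) * X) * (.C (a j) - .C (b j) * X))) /
      algebraMap ℝ[X] (RatFunc ℝ) (X ^ 2 + .C c * X + .C d)

/-- The diagonal lag `δ (1 + 1 / (s + 1)) I`, added to a mode to make it strictly negative imaginary
and its gain at infinity nonnegative. -/
def lagMatrix (n : ℕ) (δ : ℝ) : Matrix (Fin n) (Fin n) (RatFunc ℝ) :=
  diagonal fun _ =>
    algebraMap ℝ[X] (RatFunc ℝ) (.C δ * (X + 2)) / algebraMap ℝ[X] (RatFunc ℝ) (X + 1)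

lemma jw_zero : jw 0 = 0 := by simp [jw]

lemma sq_add_mul_add_ne_zero {c d : ℝ} (hc : 0 < c) (hd : 0 < d) {s : ℂ} (hs : 0 ≤ s.re) :
    s ^ 2 + c * s + d ≠ 0 := by
  intro hzero
  have hre : s.re ^ 2 - s.im ^ 2 + c * s.re + d = 0 := by
    simpa [pow_two] using congrArg Complex.re hzero
  have him : s.im * (2 * s.re + c) = 0 := by
    have him := congrArg Complex.im hzero
    simp only [pow_two, Complex.add_im, Complex.mul_im, Complex.ofReal_re, Complex.ofReal_im,
      Complex.zero_im] at him
    linarith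
  have him0 : s.im = 0 := (mul_eq_zero.mp him).resolve_right (by positivity)
  rw [him0] at hre
  nlinarith [mul_nonneg hc.le hs, sq_nonneg s.re]

lemma add_one_ne_zero_of_re_nonneg {s : ℂ} (hs : 0 ≤ s.re) : s + 1 ≠ 0 := fun hzero => by
  have hre : s.re + 1 = 0 := by simpa using congrArg Complex.re hzero
  linarith

section Mode

variable {k c d : ℝ} {a b : Fin n → ℝ}

lemma aeval_mode_denom_ne_zero (hc : 0 < c) (hd : 0 < d) (s : ℂ) (hs : 0 ≤ s.re) :
    aeval s (X ^ 2 + .C c * X + .C d : ℝ[X]) ≠ 0 := by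
  simpa using sq_add_mul_add_ne_zero hc hd hs

lemma natDegree_mode_denom (c d : ℝ) : (X ^ 2 + .C c * X + .C d : ℝ[X]).natDegree = 2 := by
  compute_degree!

lemma natDegree_mode_num_le (k α β γ ε : ℝ) :
    (.C k * ((.C α + .C β * X) * (.C γ - .C ε * X)) : ℝ[X]).natDegree ≤ 2 := by
  compute_degree!

lemma memRHinf_modeMatrix (hc : 0 < c) (hd : 0 < d) : MemRHinf (modeMatrix k c d a b) :=
  memRHinf_iff.mpr fun _ _ => div_mem_stableRing
    ((natDegree_mode_num_le ..).trans_eq (natDegree_mode_denom c d).symm)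
    (aeval_mode_denom_ne_zero hc hd)

lemma evalM_modeMatrix_jw (hc : 0 < c) (hd : 0 < d) (ω : ℝ) :
    evalM (modeMatrix k c d a b) (jw ω) = (k / (jw ω ^ 2 + c * jw ω + d)) •
      vecMulVec (fun i => a i + jw ω * b i) (star fun i => a i + jw ω * b i) := by
  have hconj : starRingEnd ℂ (jw ω) = -jw ω := by simp [jw]
  ext i j
  rw [evalM, of_apply, modeMatrix, of_apply,
    evalC_div (aeval_mode_denom_ne_zero hc hd _ (re_jw ω).ge)]
  simp only [vecMulVec_apply, Matrix.smul_apply, smul_eq_mul, Pi.star_apply, Complex.star_def,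
    map_add, map_sub, map_mul, map_pow, aeval_C, aeval_X, Complex.coe_algebraMap,
    Complex.conj_ofReal, hconj]
  ring

lemma evalInf_modeMatrix (hc : 0 < c) (hd : 0 < d) :
    evalInf (modeMatrix k c d a b) = -(k • vecMulVec b b) := by
  ext i j
  have hmonic : (X ^ 2 + .C c * X + .C d : ℝ[X]).Monic := by monicity!
  have hcoeff : (.C k * ((.C (a i) + .C (b i) * X) * (.C (a j) - .C (b j) * X)) : ℝ[X]).coeff 2 =
      -(k * (b i * b j)) := by
    rw [coeff_C_mul, ← mul_neg, show 2 = 1 + 1 from rfl,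
      coeff_mul_add_eq_of_natDegree_le (by compute_degree!) (by compute_degree!)]
    simp
  rw [evalInf, of_apply, modeMatrix, of_apply, atInfinity_div
    ((natDegree_mode_num_le ..).trans_eq (natDegree_mode_denom c d).symm)
    (aeval_mode_denom_ne_zero hc hd), natDegree_mode_denom, hmonic.leadingCoeff, div_one, hcoeff]
  rfl

lemma im_mode_gain_nonpos (hk : 0 ≤ k) (hc : 0 ≤ c) {ω : ℝ} (hω : 0 ≤ ω) :
    (k / (jw ω ^ 2 + c * jw ω + d) : ℂ).im ≤ 0 := by
  have him : (jw ω ^ 2 + c * jw ω + d).im = c * ω := by simp [jw, pow_two]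
  rw [Complex.div_im, him, Complex.ofReal_im, Complex.ofReal_re, zero_mul, zero_div, zero_sub,
    neg_nonpos]
  exact div_nonneg (by positivity) (Complex.normSq_nonneg _)

lemma posSemidef_niKer_modeMatrix (hk : 0 ≤ k) (hc : 0 < c) (hd : 0 < d) {ω : ℝ} (hω : 0 ≤ ω) :
    (niKer (evalM (modeMatrix k c d a b) (jw ω))).PosSemidef := by
  have hrankOne := posSemidef_vecMulVec_self_star fun i => (a i + jw ω * b i : ℂ)
  rw [evalM_modeMatrix_jw hc hd, niKer_smul_of_isHermitian _ hrankOne.isHermitian]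
  exact hrankOne.smul (by linarith [im_mode_gain_nonpos (d := d) hk hc.le hω])

end Mode

section Lag

variable {δ : ℝ}

lemma aeval_X_add_one_ne_zero (s : ℂ) (hs : 0 ≤ s.re) : aeval s (X + 1 : ℝ[X]) ≠ 0 := by
  simpa using add_one_ne_zero_of_re_nonneg hs

lemma natDegree_lag_num_le (δ : ℝ) :
    (.C δ * (X + 2) : ℝ[X]).natDegree ≤ (X + 1 : ℝ[X]).natDegree := by
  rw [show (X + 1 : ℝ[X]).natDegree = 1 by compute_degree!]
  compute_degree!

lemma memRHinf_lagMatrix : MemRHinf (lagMatrix n δ) := by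
  refine memRHinf_iff.mpr fun i j => ?_
  rw [lagMatrix, diagonal_apply]
  split_ifs
  · exact div_mem_stableRing (natDegree_lag_num_le δ) aeval_X_add_one_ne_zero
  · exact zero_mem _

lemma evalM_lagMatrix {s : ℂ} (hs : 0 ≤ s.re) :
    evalM (lagMatrix n δ) s = (δ * (1 + 1 / (s + 1)) : ℂ) • 1 := by
  ext i j
  rw [evalM, of_apply, lagMatrix, diagonal_apply]
  split_ifs with hij
  · have hden := add_one_ne_zero_of_re_nonneg hs
    have hnum : aeval s (.C δ * (X + 2) : ℝ[X]) = δ * (s + 1 + 1) := by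
      simp [map_ofNat, add_assoc, one_add_one_eq_two]
    rw [evalC_div (aeval_X_add_one_ne_zero s hs), hnum, hij, Matrix.smul_apply,
      one_apply_eq]
    simp only [map_add, aeval_X, map_one, smul_eq_mul, mul_one]
    field_simp
  · simp [hij, evalC]

lemma evalInf_lagMatrix : evalInf (lagMatrix n δ) = δ • 1 := by
  ext i j
  rw [evalInf, of_apply, lagMatrix, diagonal_apply]
  split_ifs with hij
  · have hdeg : (X + 1 : ℝ[X]).natDegree = 1 := by compute_degree!
    rw [atInfinity_div (natDegree_lag_num_le δ) aeval_X_add_one_ne_zero, hdeg]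
    simp [hij, show (X + 1 : ℝ[X]).Monic by monicity!]
  · simp [hij, atInfinity]

lemma posDef_niKer_lagMatrix (hδ : 0 < δ) {ω : ℝ} (hω : 0 < ω) :
    (niKer (evalM (lagMatrix n δ) (jw ω))).PosDef := by
  have hgain : (δ * (1 + 1 / (jw ω + 1)) : ℂ).im < 0 := by
    have him : (jw ω + 1).im = ω := by simp [jw]
    have hpos := div_pos hω
      (Complex.normSq_pos.mpr (add_one_ne_zero_of_re_nonneg (re_jw ω).ge))
    rw [Complex.im_ofReal_mul, Complex.add_im, Complex.one_im, zero_add, Complex.div_im, him,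
      Complex.one_im, Complex.one_re, zero_mul, zero_div, zero_sub, one_mul, mul_neg, neg_lt_zero]
    exact mul_pos hδ hpos
  rw [evalM_lagMatrix (re_jw ω).ge, niKer_smul_of_isHermitian _ isHermitian_one]
  exact PosDef.one.smul (by linarith)

end Lag

section Interpolation

variable {k c d δ : ℝ} {a b : Fin n → ℝ}

lemma isSNI_modeMatrix_add_lagMatrix (hk : 0 ≤ k) (hc : 0 < c) (hd : 0 < d) (hδ : 0 < δ) :
    IsSNI (modeMatrix k c d a b + lagMatrix n δ) := by
  have hmode : MemRHinf (modeMatrix k c d a b) := memRHinf_modeMatrix hc hd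
  refine ⟨hmode.add memRHinf_lagMatrix, fun ω hω => ?_⟩
  rw [hmode.evalM_add memRHinf_lagMatrix (re_jw ω).ge, niKer_add]
  exact (posDef_niKer_lagMatrix hδ hω).posSemidef_add (posSemidef_niKer_modeMatrix hk hc hd hω.le)

lemma posSemidef_evalInf_modeMatrix_add_lagMatrix (hk : 0 ≤ k) (hc : 0 < c) (hd : 0 < d)
    (hb : k * ∑ i, b i ^ 2 ≤ δ) :
    (evalInf (modeMatrix k c d a b + lagMatrix n δ)).PosSemidef := by
  rw [(memRHinf_modeMatrix hc hd).evalInf_add memRHinf_lagMatrix, evalInf_modeMatrix hc hd,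
    evalInf_lagMatrix, neg_add_eq_sub]
  exact posSemidef_smul_one_sub_smul_vecMulVec hk hb

lemma evalM_modeMatrix_add_lagMatrix_mulVec (hk : k ≠ 0) (hc : 0 < c) (hd : 0 < d) {ω : ℝ}
    {u y : Fin n → ℂ} (hu : ∀ i, u i = a i + jw ω * b i)
    (hden : jw ω ^ 2 + c * jw ω + d = k * (star u ⬝ᵥ y)) :
    evalM (modeMatrix k c d a b + lagMatrix n δ) (jw ω) *ᵥ y =
      u + (δ * (1 + 1 / (jw ω + 1)) : ℂ) • y := by
  have hne : (k * (star u ⬝ᵥ y) : ℂ) ≠ 0 := hden ▸ sq_add_mul_add_ne_zero hc hd (re_jw ω).ge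
  have hgain : k / (k * (star u ⬝ᵥ y)) * (star u ⬝ᵥ y) = 1 := by
    have := right_ne_zero_of_mul hne
    field_simp
  obtain rfl : u = fun i => a i + jw ω * b i := funext hu
  rw [(memRHinf_modeMatrix hc hd).evalM_add memRHinf_lagMatrix (re_jw ω).ge,
    evalM_modeMatrix_jw hc hd, evalM_lagMatrix (re_jw ω).ge, hden, add_mulVec, smul_mulVec,
    smul_mulVec, one_mulVec, vecMulVec_mulVec, op_smul_eq_smul, smul_smul, hgain, one_smul]

/- Reserve a small lag `δ (1 + 1 / (s + 1)) y` and let the mode produce the remaining part `u` of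
`x`. The mode returns `u` itself when its denominator at `jω` is `k (u* y)`; since
`Im (u* y) > 0`, this is solved by positive `c` and `d` for small `k`. -/
lemma exists_isSNI_evalM_jw_mulVec_eq {ω : ℝ} (hω : 0 < ω) {x y : Fin n → ℂ}
    (hxy : 0 < (star x ⬝ᵥ y).im) : ∃ P : Matrix (Fin n) (Fin n) (RatFunc ℝ),
      IsSNI P ∧ (evalInf P).PosSemidef ∧ evalM P (jw ω) *ᵥ y = x := by
  set e : ℂ := 1 + 1 / (jw ω + 1) with he
  obtain ⟨δ, hδ, him⟩ : ∃ δ > 0, 0 < (star (x - ((δ : ℝ) * e) • y) ⬝ᵥ y).im := by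
    have hcont : Continuous fun δ : ℝ => (star (x - (δ * e) • y) ⬝ᵥ y).im := by
      simp only [dotProduct, Pi.star_apply, Pi.sub_apply, Pi.smul_apply, smul_eq_mul]
      fun_prop
    exact (hcont.continuousAt.eventually_const_lt (by simpa using hxy)).exists_gt
  set u := x - (δ * e) • y with hu
  set z := star u ⬝ᵥ y
  obtain ⟨k, hk, hd, hb⟩ : ∃ k > 0, 0 < ω ^ 2 + k * z.re ∧ k * ∑ i, ((u i).im / ω) ^ 2 ≤ δ := by
    have hd : Continuous fun k : ℝ => ω ^ 2 + k * z.re := by fun_prop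
    have hb : Continuous fun k : ℝ => k * ∑ i, ((u i).im / ω) ^ 2 := by fun_prop
    exact ((hd.continuousAt.eventually_const_lt (by simpa using pow_pos hω 2)).and
      (hb.continuousAt.eventually_le_const (by simpa using hδ))).exists_gt
  have hc : 0 < k * z.im / ω := by positivity
  have hden : jw ω ^ 2 + (k * z.im / ω : ℝ) * jw ω + (ω ^ 2 + k * z.re : ℝ) = k * z := by
    apply Complex.ext
    · simp [jw, pow_two]
    · simp [jw, pow_two, hω.ne']
  have hsplit (i : Fin n) : u i = (u i).re + jw ω * ((u i).im / ω : ℝ) := by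
    apply Complex.ext
    · simp [jw]
    · simp [jw, mul_div_cancel₀ _ hω.ne']
  refine ⟨modeMatrix k (k * z.im / ω) (ω ^ 2 + k * z.re) (fun i => (u i).re)
      (fun i => (u i).im / ω) + lagMatrix n δ, isSNI_modeMatrix_add_lagMatrix hk.le hc hd hδ,
    posSemidef_evalInf_modeMatrix_add_lagMatrix hk.le hc hd hb, ?_⟩
  rw [evalM_modeMatrix_add_lagMatrix_mulVec hk.ne' hc hd hsplit hden, hu, ← he, sub_add_cancel]

lemma exists_isSNI_evalM_zero_mulVec_eq {x y : Fin n → ℝ} (hxy : 0 < x ⬝ᵥ y) :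
    ∃ P : Matrix (Fin n) (Fin n) (RatFunc ℝ), IsSNI P ∧ (evalInf P).PosSemidef ∧
      evalM P 0 *ᵥ (Complex.ofReal ∘ y) = Complex.ofReal ∘ x := by
  obtain ⟨δ, hδ, hpos⟩ : ∃ δ > 0, 0 < (x - ((δ : ℝ) * 2) • y) ⬝ᵥ y := by
    have hcont : Continuous fun δ : ℝ => (x - (δ * 2) • y) ⬝ᵥ y := by
      simp only [dotProduct, Pi.sub_apply, Pi.smul_apply, smul_eq_mul]
      fun_prop
    exact (hcont.continuousAt.eventually_const_lt (by simpa using hxy)).exists_gt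
  set u := x - (δ * 2) • y with hu
  have hden : jw 0 ^ 2 + (1 : ℝ) * jw 0 + (u ⬝ᵥ y : ℝ) =
      (1 : ℝ) * (star (Complex.ofReal ∘ u) ⬝ᵥ (Complex.ofReal ∘ y)) := by
    simp [jw_zero, dotProduct]
  refine ⟨modeMatrix 1 1 (u ⬝ᵥ y) u 0 + lagMatrix n δ,
    isSNI_modeMatrix_add_lagMatrix zero_le_one one_pos hpos hδ,
    posSemidef_evalInf_modeMatrix_add_lagMatrix zero_le_one one_pos hpos
      (by simpa using hδ.le), ?_⟩
  rw [← jw_zero, evalM_modeMatrix_add_lagMatrix_mulVec one_ne_zero one_pos hpos (by simp) hden]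
  ext i
  simp [hu, jw_zero, one_add_one_eq_two]

end Interpolation

lemma FeedbackStable.eq_zero_of_fixed {P : Matrix (Fin n) (Fin n) (RatFunc ℝ)}
    (hPC : FeedbackStable P C) (hP : MemRHinf P) (hC : MemRHinf C) {s : ℂ} (hs : 0 ≤ s.re)
    {x : Fin n → ℂ} (hx : evalM P s *ᵥ (evalM C s *ᵥ x) = x) : x = 0 := by
  by_contra hx0
  exact ((feedbackStable_iff hP hC).mp hPC).1 s hs (det_one_sub_mul_eq_zero_iff.mpr ⟨x, hx0, hx⟩)

lemma posSemidef_niKer_of_forall_feedbackStable (hC : MemRHinf C)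
    (hstable : ∀ P : Matrix (Fin n) (Fin n) (RatFunc ℝ),
      IsSNI P → (evalInf P).PosSemidef → FeedbackStable P C)
    {ω : ℝ} (hω : 0 < ω) :
    (niKer (evalM C (jw ω))).PosSemidef := by
  refine posSemidef_niKer_iff.mpr fun x => not_lt.mp fun hx => ?_
  obtain ⟨P, hP, hinf, hPx⟩ := exists_isSNI_evalM_jw_mulVec_eq hω hx
  obtain rfl := (hstable P hP hinf).eq_zero_of_fixed hP.1 hC (re_jw ω).ge hPx
  simp [quadForm] at hx

lemma posSemidef_niKer_evalM_zero_of_forall_feedbackStable (hC : MemRHinf C)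
    (hstable : ∀ P : Matrix (Fin n) (Fin n) (RatFunc ℝ),
      IsSNI P → (evalInf P).PosSemidef → FeedbackStable P C) :
    (niKer (evalM C 0)).PosSemidef := by
  refine posSemidef_niKer_iff.mpr fun x => ?_
  have hform : ContinuousAt (fun s => quadForm (evalM C s) x) (jw 0) :=
    (hC.differentiableAt_quadForm x (re_jw 0).ge).continuousAt
  have hcont : ContinuousAt (fun ω => (quadForm (evalM C (jw ω)) x).im) 0 :=
    Complex.continuous_im.continuousAt.comp
      (ContinuousAt.comp (f := jw) hform continuous_jw.continuousAt)
  rw [← jw_zero]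
  refine le_of_tendsto (hcont.tendsto.mono_left (nhdsWithin_le_nhds (s := Set.Ioi 0))) ?_
  filter_upwards [self_mem_nhdsWithin] with ω hω
  exact posSemidef_niKer_iff.mp (posSemidef_niKer_of_forall_feedbackStable hC hstable hω) x

lemma evalR_zero_loewnerLE_zero_of_forall_feedbackStable (hC : MemRHinf C)
    (hstable : ∀ P : Matrix (Fin n) (Fin n) (RatFunc ℝ),
      IsSNI P → (evalInf P).PosSemidef → FeedbackStable P C) :
    LoewnerLE (evalR C 0) 0 := by
  have hsymm : (evalR C 0).IsSymm := isSymm_of_posSemidef_niKer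
    (evalM_zero C ▸ posSemidef_niKer_evalM_zero_of_forall_feedbackStable hC hstable)
  rw [LoewnerLE, zero_sub]
  refine PosSemidef.of_dotProduct_mulVec_nonneg hsymm.neg fun x => not_lt.mp fun hx => ?_
  rw [neg_mulVec, dotProduct_neg, neg_lt_zero, star_trivial] at hx
  obtain ⟨P, hP, hinf, hPx⟩ := exists_isSNI_evalM_zero_mulVec_eq hx
  have hmulVec : Complex.ofReal ∘ (evalR C 0 *ᵥ x) = evalM C 0 *ᵥ (Complex.ofReal ∘ x) := by
    ext i
    simp [evalM_zero, mulVec, dotProduct]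
  rw [hmulVec] at hPx
  have hzero := (hstable P hP hinf).eq_zero_of_fixed hP.1 hC le_rfl hPx
  obtain rfl : x = 0 := funext fun i => by simpa using congrFun hzero i
  simp at hx

end Destabilization

/-- converse theorem for stable SNI uncertainty with nonnegative
instantaneous gain. -/
theorem converse_stable_SNI {n : ℕ} (C : Matrix (Fin n) (Fin n) (RatFunc ℝ)) (hC : MemRHinf C) :
    (∀ P : Matrix (Fin n) (Fin n) (RatFunc ℝ), IsSNI P → (evalInf P).PosSemidef → FeedbackStable P C) ↔
      (IsNI C ∧ LoewnerLE (evalR C 0) 0) := by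
  rw [isNI_iff_of_memRHinf hC]
  constructor
  · intro hstable
    exact ⟨fun ω hω => posSemidef_niKer_of_forall_feedbackStable hC hstable hω,
      evalR_zero_loewnerLE_zero_of_forall_feedbackStable hC hstable⟩
  · rintro ⟨hNI, hzero⟩ P hP hinf
    exact hP.feedbackStable hinf hC hNI hzero

end NIControl
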